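/- arXiv:1004.4530 — 2 statements merged into one kernel-verified Lean document; each statement's English description precedes it below -/
import Mathlib

section
/- For every finite set 𝒮, every probability distribution P_S on 𝒮, and every real ℓ ≥ 0, there exist finite sets 𝒰_n, 𝒳_n, 𝒴_n and a sequence {(φ_n*, ψ_n*)}_{n≥1} of encoder/decoder pairs that asymptotically realizes a (2,2)-threshold scheme with correlation level ℓ for which the following limits exist and take the stated values: lim_{n→∞} (1/n) log₂|𝒳_n| = lim_{n→∞} (1/n) log₂|𝒴_n| = lim_{n→∞} (1/n) log₂|𝒰_n| = H(S)+ℓ, and lim_{n→∞} −(1/n) log₂ P_n^X = lim_{n→∞} −(1/n) log₂ P_n^Y = ℓ. -/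
open Finset Filter Real
open scoped BigOperators

noncomputable section

/-- `p` is a probability mass function on a finite type. -/
def IsPMF {α : Type*} [Fintype α] (p : α → ℝ) : Prop :=
  (∀ a, 0 ≤ p a) ∧ ∑ a, p a = 1

open scoped Classical in
/-- The distribution (pushforward pmf) of a random variable `X`
defined on a finite sample space carrying the pmf `p`. -/
def distOf {Ω α : Type*} [Fintype Ω] (p : Ω → ℝ) (X : Ω → α) (x : α) : ℝ :=
  ∑ ω ∈ Finset.univ.filter fun ω => X ω = x, p ω

/-- Base-2 Shannon entropy of a pmf on a finite type
(the convention `0 · log₂ 0 = 0` holds since `Real.logb 2 0 = 0`). -/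
def ent {α : Type*} [Fintype α] (q : α → ℝ) : ℝ :=
  -∑ x, q x * Real.logb 2 (q x)

/-- Base-2 entropy `H(X)` of a random variable `X` under pmf `p`. -/
def entRV {Ω α : Type*} [Fintype Ω] [Fintype α] (p : Ω → ℝ) (X : Ω → α) : ℝ :=
  ent (distOf p X)

/-- Base-2 conditional entropy `H(X|Y) = H(X,Y) − H(Y)`. -/
def condEnt {Ω α β : Type*} [Fintype Ω] [Fintype α] [Fintype β]
    (p : Ω → ℝ) (X : Ω → α) (Y : Ω → β) : ℝ :=
  entRV p (fun ω => (X ω, Y ω)) - entRV p Y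

/-- Base-2 mutual information `I(X;Y) = H(X) + H(Y) − H(X,Y)`. -/
def MI {Ω α β : Type*} [Fintype Ω] [Fintype α] [Fintype β]
    (p : Ω → ℝ) (X : Ω → α) (Y : Ω → β) : ℝ :=
  entRV p X + entRV p Y - entRV p (fun ω => (X ω, Y ω))

/-- `X` and `Y` are independent random variables under the pmf `p`. -/
def IndepRV {Ω α β : Type*} [Fintype Ω] (p : Ω → ℝ) (X : Ω → α) (Y : Ω → β) : Prop :=
  ∀ a b, distOf p (fun ω => (X ω, Y ω)) (a, b) = distOf p X a * distOf p Y b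

/-- An encoder/decoder sequence for the asymptotic (2,2)-threshold setup:
for each `n`, a finite nonempty randomness alphabet `U n`, finite share
alphabets `X n` and `Y n`, a deterministic encoder `enc n` mapping the `n`
secrets and the uniform random number to the two shares, and a decoder
`dec n` (`none` plays the role of the detection symbol `⊥`). -/
structure Scheme22 (𝒮 : Type) where
  U : ℕ → Type
  X : ℕ → Type
  Y : ℕ → Type
  fU : ∀ n, Fintype (U n)
  fX : ∀ n, Fintype (X n)
  fY : ∀ n, Fintype (Y n)
  neU : ∀ n, Nonempty (U n)
  enc : ∀ n, (Fin n → 𝒮) → U n → X n × Y n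
  dec : ∀ n, X n × Y n → Option (Fin n → 𝒮)

attribute [instance] Scheme22.fU Scheme22.fX Scheme22.fY Scheme22.neU

variable {𝒮 : Type} [Fintype 𝒮]

/-- The joint pmf of `(Sⁿ, Uₙ)` on `(Fin n → 𝒮) × C.U n`:
`Sⁿ` is i.i.d. with marginal `PS`, and `Uₙ` is uniform and independent of `Sⁿ`. -/
def jp (C : Scheme22 𝒮) (PS : 𝒮 → ℝ) (n : ℕ) : (Fin n → 𝒮) × C.U n → ℝ :=
  fun ω => (∏ i, PS (ω.1 i)) / (Fintype.card (C.U n) : ℝ)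

/-- The secret `Sⁿ` as a random variable. -/
def Sn (C : Scheme22 𝒮) (n : ℕ) : (Fin n → 𝒮) × C.U n → (Fin n → 𝒮) := Prod.fst

/-- The share `Xₙ` as a random variable. -/
def Xn (C : Scheme22 𝒮) (n : ℕ) : (Fin n → 𝒮) × C.U n → C.X n :=
  fun ω => (C.enc n ω.1 ω.2).1

/-- The share `Yₙ` as a random variable. -/
def Yn (C : Scheme22 𝒮) (n : ℕ) : (Fin n → 𝒮) × C.U n → C.Y n :=
  fun ω => (C.enc n ω.1 ω.2).2

open scoped Classical in
/-- The acceptance region `𝒜ₙ` of the decoder. -/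
def AccRegion (C : Scheme22 𝒮) (n : ℕ) : Finset (C.X n × C.Y n) :=
  Finset.univ.filter fun xy => C.dec n xy ≠ none

open scoped Classical in
/-- The decoding error probability `Pₙᵉ = Pr{ψₙ(φₙ(Sⁿ,Uₙ)) ≠ Sⁿ}`. -/
def Pe (C : Scheme22 𝒮) (PS : 𝒮 → ℝ) (n : ℕ) : ℝ :=
  ∑ ω ∈ Finset.univ.filter
      (fun ω : (Fin n → 𝒮) × C.U n => C.dec n (C.enc n ω.1 ω.2) ≠ some ω.1),
    jp C PS n ω

/-- `Pₙˣ`: the maximal success probability of impersonating participant 1,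
the supremum over all forging distributions `Q` on `𝒳ₙ`. -/
def PimpX (C : Scheme22 𝒮) (PS : 𝒮 → ℝ) (n : ℕ) : ℝ :=
  ⨆ Q : {Q : C.X n → ℝ // IsPMF Q},
    ∑ xy ∈ AccRegion C n, Q.1 xy.1 * distOf (jp C PS n) (Yn C n) xy.2

/-- `Pₙʸ`: the maximal success probability of impersonating participant 2. -/
def PimpY (C : Scheme22 𝒮) (PS : 𝒮 → ℝ) (n : ℕ) : ℝ :=
  ⨆ Q : {Q : C.Y n → ℝ // IsPMF Q},
    ∑ xy ∈ AccRegion C n, distOf (jp C PS n) (Xn C n) xy.1 * Q.1 xy.2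

/-- The sequence `{(φₙ,ψₙ)}` asymptotically realizes a (2,2)-threshold scheme
with correlation level `ℓ`: vanishing decoding error probability, vanishing
normalized leakage `I(Sⁿ;Xₙ)/n` and `I(Sⁿ;Yₙ)/n`, and `I(Xₙ;Yₙ)/n → ℓ`. -/
def Realizes (C : Scheme22 𝒮) (PS : 𝒮 → ℝ) (ℓ : ℝ) : Prop :=
  Tendsto (fun n => Pe C PS n) atTop (nhds 0) ∧
  Tendsto (fun n => MI (jp C PS n) (Sn C n) (Xn C n) / (n : ℝ)) atTop (nhds 0) ∧
  Tendsto (fun n => MI (jp C PS n) (Sn C n) (Yn C n) / (n : ℝ)) atTop (nhds 0) ∧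
  Tendsto (fun n => MI (jp C PS n) (Xn C n) (Yn C n) / (n : ℝ)) atTop (nhds ℓ)

lemma distOf_eq {Ω α : Type*} [Fintype Ω] [DecidableEq α] (p : Ω → ℝ) (X : Ω → α) (x : α) :
    distOf p X x = ∑ ω, if X ω = x then p ω else 0 := by
  unfold distOf
  rw [Finset.sum_filter]
  refine Finset.sum_congr rfl fun ω _ => ?_
  split_ifs <;> rfl

lemma distOf_nonneg {Ω α : Type*} [Fintype Ω] (p : Ω → ℝ) (hp : ∀ ω, 0 ≤ p ω)
    (X : Ω → α) (x : α) : 0 ≤ distOf p X x :=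
  Finset.sum_nonneg fun ω _ => hp ω

lemma sum_distOf {Ω α : Type*} [Fintype Ω] [Fintype α] (p : Ω → ℝ) (X : Ω → α) :
    ∑ x, distOf p X x = ∑ ω, p ω := by
  classical
  simp_rw [distOf_eq]
  rw [Finset.sum_comm]
  simp

lemma distOf_isPMF {Ω α : Type*} [Fintype Ω] [Fintype α] (p : Ω → ℝ) (hp : IsPMF p)
    (X : Ω → α) : IsPMF (distOf p X) :=
  ⟨distOf_nonneg p hp.1 X, by rw [sum_distOf]; exact hp.2⟩

lemma entRV_inj {Ω α β : Type*} [Fintype Ω] [Fintype α] [Fintype β] (p : Ω → ℝ)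
    (Z : Ω → α) (e : α → β) (he : Function.Injective e) :
    entRV p (fun ω => e (Z ω)) = entRV p Z := by
  classical
  unfold entRV ent
  congr 1
  have h1 : ∀ a, distOf p (fun ω => e (Z ω)) (e a) = distOf p Z a := by
    intro a
    simp_rw [distOf_eq, he.eq_iff]
  have h2 : ∀ b, b ∉ Set.range e → distOf p (fun ω => e (Z ω)) b = 0 := by
    intro b hb
    rw [distOf_eq]
    refine Finset.sum_eq_zero fun ω _ => ?_
    rw [if_neg]
    intro h
    exact hb ⟨_, h⟩
  symm
  refine Finset.sum_of_injOn e he.injOn (by simp) ?_ ?_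
  · intro b _ hb
    rw [h2 b (by simpa using hb)]
    simp
  · intro a _
    rw [h1]

lemma ent_uniform {α : Type*} [Fintype α] [Nonempty α] :
    ent (fun _ : α => 1 / (Fintype.card α : ℝ)) = Real.logb 2 (Fintype.card α) := by
  unfold ent
  have : (Fintype.card α : ℝ) ≠ 0 := by exact_mod_cast Fintype.card_ne_zero
  simp

lemma distOf_prod_unif {A U α : Type*} [Fintype A] [Fintype U] (p : A → ℝ) (N : ℝ)
    (Z : A → α) (z : α) (u : U) :
    distOf (fun ω : A × U => p ω.1 / N) (fun ω => (Z ω.1, ω.2)) (z, u) = distOf p Z z / N := by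
  classical
  simp_rw [distOf_eq, Fintype.sum_prod_type, Prod.mk.injEq]
  rw [Finset.sum_div]
  refine Finset.sum_congr rfl fun a _ => ?_
  by_cases h : Z a = z <;> simp [h]

lemma entRV_prod_unif {A U α : Type*} [Fintype A] [Fintype U] [Nonempty U] [Fintype α]
    (p : A → ℝ) (hp : IsPMF p) (Z : A → α) :
    entRV (fun ω : A × U => p ω.1 / (Fintype.card U : ℝ)) (fun ω => (Z ω.1, ω.2))
      = entRV p Z + Real.logb 2 (Fintype.card U) := by
  have hN : (Fintype.card U : ℝ) ≠ 0 := by exact_mod_cast Fintype.card_ne_zero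
  have hq := distOf_isPMF p hp Z
  unfold entRV ent
  simp_rw [Fintype.sum_prod_type, distOf_prod_unif]
  simp only [Finset.sum_const, Finset.card_univ, nsmul_eq_mul]
  have : ∀ x, (Fintype.card U : ℝ) * (distOf p Z x / (Fintype.card U : ℝ) *
      Real.logb 2 (distOf p Z x / (Fintype.card U : ℝ))) =
      distOf p Z x * Real.logb 2 (distOf p Z x)
        - distOf p Z x * Real.logb 2 (Fintype.card U) := by
    intro x
    by_cases hx : distOf p Z x = 0
    · simp [hx]
    · rw [Real.logb_div hx hN]; field_simp
  simp_rw [this]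
  rw [Finset.sum_sub_distrib, ← Finset.sum_mul, hq.2]
  ring

lemma distOf_bij {A U : Type*} [Fintype A] [Fintype U] (p : A → ℝ) (hp : IsPMF p) (N : ℝ)
    (h : A → U → U) (hb : ∀ s, Function.Bijective (h s)) (y : U) :
    distOf (fun ω : A × U => p ω.1 / N) (fun ω => h ω.1 ω.2) y = 1 / N := by
  classical
  simp_rw [distOf_eq, Fintype.sum_prod_type]
  rw [← hp.2, Finset.sum_div]
  refine Finset.sum_congr rfl fun a _ => ?_
  obtain ⟨u, hu⟩ := (hb a).2 y
  have : ∀ v, h a v = y ↔ v = u := fun v => by rw [← hu, (hb a).1.eq_iff]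
  simp [this]

lemma entRV_fst {A U : Type*} [Fintype A] [Fintype U] [Nonempty U] (p : A → ℝ) :
    entRV (fun ω : A × U => p ω.1 / (Fintype.card U : ℝ)) Prod.fst = ent p := by
  classical
  unfold entRV
  congr 1
  funext a
  have hN : (Fintype.card U : ℝ) ≠ 0 := by exact_mod_cast Fintype.card_ne_zero
  rw [distOf_eq, Fintype.sum_prod_type]
  simp only [Finset.sum_const, Finset.card_univ, nsmul_eq_mul]
  simp
  field_simp

lemma entRV_id {A : Type*} [Fintype A] (p : A → ℝ) : entRV p (fun a => a) = ent p := by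
  classical
  unfold entRV
  congr 1
  funext a
  simp [distOf_eq]

/-- Gibbs: entropy is at most the log of the alphabet size. -/
lemma ent_le {α : Type*} [Fintype α] [Nonempty α] (q : α → ℝ) (hq : IsPMF q) :
    ent q ≤ Real.logb 2 (Fintype.card α) := by
  have hN : (0 : ℝ) < Fintype.card α := by exact_mod_cast Fintype.card_pos
  have hl : 0 < Real.log 2 := Real.log_pos (by norm_num)
  have key : ∀ x, -(q x * Real.log (q x)) - q x * Real.log (Fintype.card α)
      ≤ 1 / (Fintype.card α : ℝ) - q x := by
    intro x
    rcases (hq.1 x).eq_or_lt with h | h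
    · rw [← h]; simp
    · have h1 := Real.log_le_sub_one_of_pos (x := 1 / ((Fintype.card α : ℝ) * q x))
        (by positivity)
      rw [one_div, Real.log_inv, Real.log_mul hN.ne' h.ne'] at h1
      have h2 := mul_le_mul_of_nonneg_left h1 h.le
      have h3 : q x * (((Fintype.card α : ℝ) * q x)⁻¹ - 1) = 1 / (Fintype.card α : ℝ) - q x := by
        field_simp
      nlinarith
  have hs := Finset.sum_le_sum fun x (_ : x ∈ Finset.univ) => key x
  rw [Finset.sum_sub_distrib, Finset.sum_sub_distrib, ← Finset.sum_mul, hq.2] at hs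
  simp only [Finset.sum_const, Finset.card_univ, nsmul_eq_mul, Finset.sum_neg_distrib] at hs
  rw [mul_one_div_cancel hN.ne'] at hs
  unfold ent Real.logb
  have : ∑ x, q x * (Real.log (q x) / Real.log 2) = (∑ x, q x * Real.log (q x)) / Real.log 2 := by
    rw [Finset.sum_div]
    exact Finset.sum_congr rfl fun x _ => by ring
  rw [this, ← neg_div]
  gcongr
  linarith

lemma le_one_of_isPMF {α : Type*} [Fintype α] {q : α → ℝ} (hq : IsPMF q) (x : α) : q x ≤ 1 := by
  rw [← hq.2]
  exact Finset.single_le_sum (fun a _ => hq.1 a) (Finset.mem_univ x)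

lemma ent_term_nonneg {α : Type*} [Fintype α] {q : α → ℝ} (hq : IsPMF q) (x : α) :
    0 ≤ -(q x * Real.logb 2 (q x)) := by
  have h := Real.logb_nonpos (b := 2) (by norm_num) (hq.1 x) (le_one_of_isPMF hq x)
  have := mul_nonneg (hq.1 x) (neg_nonneg.2 h)
  linarith

lemma ent_nonneg {α : Type*} [Fintype α] {q : α → ℝ} (hq : IsPMF q) : 0 ≤ ent q := by
  unfold ent
  rw [← Finset.sum_neg_distrib]
  exact Finset.sum_nonneg fun x _ => ent_term_nonneg hq x

lemma sum_cons_pi {𝒮 : Type} [Fintype 𝒮] (n : ℕ) (F : (Fin (n+1) → 𝒮) → ℝ) :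
    ∑ s, F s = ∑ a : 𝒮, ∑ s : Fin n → 𝒮, F (Fin.cons a s) := by
  rw [← Fintype.sum_prod_type' (f := fun a s => F (Fin.cons a s))]
  exact (Fintype.sum_equiv (Fin.consEquiv (fun _ => 𝒮)) _ _ (fun x => rfl)).symm

lemma moments {𝒮 : Type} [Fintype 𝒮] (PS : 𝒮 → ℝ) (hPS : IsPMF PS) (g : 𝒮 → ℝ)
    (hg : ∑ a, PS a * g a = 0) (n : ℕ) :
    (∑ s : Fin n → 𝒮, ∏ i, PS (s i) = 1) ∧
    (∑ s : Fin n → 𝒮, (∏ i, PS (s i)) * ∑ i, g (s i) = 0) ∧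
    (∑ s : Fin n → 𝒮, (∏ i, PS (s i)) * (∑ i, g (s i)) ^ 2 = n * ∑ a, PS a * g a ^ 2) := by
  induction n with
  | zero => simp
  | succ n ih =>
    obtain ⟨h0, h1, h2⟩ := ih
    simp_rw [sum_cons_pi, Fin.prod_univ_succ, Fin.sum_univ_succ, Fin.cons_zero, Fin.cons_succ]
    refine ⟨?_, ?_, ?_⟩
    · simp_rw [← Finset.mul_sum, h0, mul_one]; exact hPS.2
    · have : ∀ a, ∑ s : Fin n → 𝒮, PS a * (∏ i, PS (s i)) * (g a + ∑ i, g (s i)) =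
          PS a * g a := by
        intro a
        have : ∀ s : Fin n → 𝒮, PS a * (∏ i, PS (s i)) * (g a + ∑ i, g (s i)) =
          (PS a * g a) * (∏ i, PS (s i)) + PS a * ((∏ i, PS (s i)) * ∑ i, g (s i)) :=
            fun s => by ring
        simp_rw [this, Finset.sum_add_distrib, ← Finset.mul_sum, h0, h1]; ring
      simp_rw [this]; exact hg
    · have : ∀ a, ∑ s : Fin n → 𝒮, PS a * (∏ i, PS (s i)) * (g a + ∑ i, g (s i)) ^ 2 =
          PS a * g a ^ 2 + PS a * (n * ∑ a, PS a * g a ^ 2) := by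
        intro a
        have : ∀ s : Fin n → 𝒮, PS a * (∏ i, PS (s i)) * (g a + ∑ i, g (s i)) ^ 2 =
          (PS a * g a ^ 2) * (∏ i, PS (s i)) + (2 * PS a * g a) * ((∏ i, PS (s i)) * ∑ i, g (s i))
            + PS a * ((∏ i, PS (s i)) * (∑ i, g (s i)) ^ 2) :=
            fun s => by ring
        simp_rw [this, Finset.sum_add_distrib, ← Finset.mul_sum, h0, h1, h2]; ring
      simp_rw [this]
      rw [Finset.sum_add_distrib, ← Finset.sum_mul, hPS.2]
      push_cast; ring

lemma exists_code {A : Type} [Fintype A] [Nonempty A] (T : Finset A) :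
    ∃ (f : A → Fin (T.card + 1)) (g : Fin (T.card + 1) → A),
      (∀ s ∈ T, g (f s) = s) ∧ ∀ s ∈ T, ∀ s', f s' = f s → s' = s := by
  classical
  refine ⟨fun s => if h : s ∈ T then (T.equivFin ⟨s, h⟩).succ else 0,
    fun k => Fin.cases (Classical.arbitrary A) (fun j => (T.equivFin.symm j : A)) k, ?_, ?_⟩
  · intro s hs
    simp [hs]
  · intro s hs s' h
    by_cases hs' : s' ∈ T
    · simpa [hs, hs'] using h
    · simp [hs, hs'] at h
      exact absurd h.symm (Fin.succ_ne_zero _)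

/-- One-shot fixed-length source coding via the typical set. -/
lemma code_n {𝒮 : Type} [Fintype 𝒮] [Nonempty 𝒮] (PS : 𝒮 → ℝ) (hPS : IsPMF PS) (n : ℕ)
    (δ : ℝ) (hδ : 0 < δ) :
    ∃ (t : ℕ) (f : (Fin n → 𝒮) → Fin (t + 1)) (g : Fin (t + 1) → (Fin n → 𝒮)) (e : ℝ),
      0 ≤ e ∧
      e ≤ n * (∑ a, PS a * (-Real.logb 2 (PS a) - ent PS) ^ 2) / δ ^ 2 ∧
      (∀ [DecidablePred fun s => g (f s) ≠ s],
        ∑ s ∈ Finset.univ.filter (fun s => g (f s) ≠ s), ∏ i, PS (s i) ≤ e) ∧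
      (1 - e) * (n * ent PS - δ) ≤ entRV (fun s : Fin n → 𝒮 => ∏ i, PS (s i)) f ∧
      entRV (fun s : Fin n → 𝒮 => ∏ i, PS (s i)) f ≤ Real.logb 2 ((t : ℝ) + 1) ∧
      Real.logb 2 ((t : ℝ) + 1) ≤ 1 + n * ent PS + δ := by
  classical
  set g0 : 𝒮 → ℝ := fun a => -Real.logb 2 (PS a) - ent PS with hg0
  have hmean : ∑ a, PS a * g0 a = 0 := by
    simp only [hg0, mul_sub, mul_neg, Finset.sum_sub_distrib, Finset.sum_neg_distrib,
      ← Finset.sum_mul, hPS.2]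
    unfold ent; ring
  obtain ⟨m0, -, m2⟩ := moments PS hPS g0 hmean n
  set p : (Fin n → 𝒮) → ℝ := fun s => ∏ i, PS (s i) with hp
  have hp0 : ∀ s, 0 ≤ p s := fun s => Finset.prod_nonneg fun i _ => hPS.1 _
  have hpP : IsPMF p := ⟨hp0, m0⟩
  have hlog : ∀ s, p s ≠ 0 → -Real.logb 2 (p s) = ∑ i, g0 (s i) + n * ent PS := by
    intro s hs
    have h1 : Real.logb 2 (p s) = ∑ i, Real.logb 2 (PS (s i)) := by
      simp only [hp, Real.logb]
      rw [Real.log_prod (fun i _ => (Finset.prod_ne_zero_iff.1 hs) i (Finset.mem_univ i)),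
        Finset.sum_div]
    rw [h1]
    simp [hg0, Finset.sum_sub_distrib]
  set T : Finset (Fin n → 𝒮) :=
    Finset.univ.filter (fun s => p s ≠ 0 ∧ |∑ i, g0 (s i)| ≤ δ) with hT
  obtain ⟨f, g, hgf, hf⟩ := exists_code T
  have hsplit : ∑ s ∈ T, p s + ∑ s ∈ Tᶜ, p s = 1 := by
    rw [Finset.sum_add_sum_compl]; exact m0
  have hH := ent_nonneg hPS
  refine ⟨T.card, f, g, ∑ s ∈ Tᶜ, p s, Finset.sum_nonneg fun s _ => hp0 s, ?_, ?_, ?_, ?_, ?_⟩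
  · rw [le_div_iff₀ (by positivity), ← m2, Finset.sum_mul]
    calc ∑ s ∈ Tᶜ, p s * δ ^ 2 ≤ ∑ s ∈ Tᶜ, p s * (∑ i, g0 (s i)) ^ 2 := by
          refine Finset.sum_le_sum fun s hs => ?_
          by_cases h : p s = 0
          · simp [h]
          · have : δ < |∑ i, g0 (s i)| := by
              by_contra hc
              simp [hT, h] at hs
              exact hc hs
            refine mul_le_mul_of_nonneg_left ?_ (hp0 s)
            rw [← sq_abs (∑ i, g0 (s i))]
            exact pow_le_pow_left₀ hδ.le this.le 2
      _ ≤ _ := Finset.sum_le_univ_sum_of_nonneg fun s => mul_nonneg (hp0 s) (sq_nonneg _)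
  · intro _
    refine Finset.sum_le_sum_of_subset_of_nonneg ?_ fun s _ _ => hp0 s
    intro s hs
    simp only [Finset.mem_filter, Finset.mem_univ, true_and] at hs
    rw [Finset.mem_compl]
    exact fun h => hs (hgf s h)
  · have hq : ∀ s ∈ T, distOf p f (f s) = p s := by
      intro s hs
      rw [distOf_eq, Finset.sum_eq_single s]
      · simp
      · intro b _ hb
        rw [if_neg]
        exact fun h => hb (hf s hs b h)
      · simp
    have hqP := distOf_isPMF p hpP f
    calc (1 - ∑ s ∈ Tᶜ, p s) * (n * ent PS - δ) = ∑ s ∈ T, p s * (n * ent PS - δ) := by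
          rw [← hsplit, ← Finset.sum_mul]; ring
      _ ≤ ∑ s ∈ T, -(p s * Real.logb 2 (p s)) := by
          refine Finset.sum_le_sum fun s hs => ?_
          simp only [hT, Finset.mem_filter, Finset.mem_univ, true_and] at hs
          rw [← mul_neg, hlog s hs.1]
          refine mul_le_mul_of_nonneg_left ?_ (hp0 s)
          linarith [(abs_le.1 hs.2).1]
      _ = ∑ k ∈ T.image f, -(distOf p f k * Real.logb 2 (distOf p f k)) := by
          rw [Finset.sum_image (fun a _ b hb h => hf b hb a h)]
          exact Finset.sum_congr rfl fun s hs => by rw [hq s hs]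
      _ ≤ ∑ k, -(distOf p f k * Real.logb 2 (distOf p f k)) :=
          Finset.sum_le_univ_sum_of_nonneg fun k => ent_term_nonneg hqP k
      _ = entRV p f := by rw [Finset.sum_neg_distrib]; rfl
  · have := ent_le _ (distOf_isPMF p hpP f)
    simpa [entRV] using this
  · have hcard : (T.card : ℝ) ≤ 2 ^ (n * ent PS + δ) := by
      have h1 : ∀ s ∈ T, (2 : ℝ) ^ (-(n * ent PS + δ)) ≤ p s := by
        intro s hs
        simp only [hT, Finset.mem_filter, Finset.mem_univ, true_and] at hs
        rw [← Real.le_logb_iff_rpow_le (by norm_num) (lt_of_le_of_ne (hp0 s) (Ne.symm hs.1))]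
        have := hlog s hs.1
        linarith [(abs_le.1 hs.2).2]
      have h2 := Finset.card_nsmul_le_sum T p _ h1
      have h3 : ∑ s ∈ T, p s ≤ 1 := by
        have := Finset.sum_nonneg (s := Tᶜ) fun s _ => hp0 s
        linarith
      rw [nsmul_eq_mul, Real.rpow_neg (by norm_num)] at h2
      have h4 := h2.trans h3
      rwa [← div_eq_mul_inv, div_le_one (by positivity)] at h4
    have h1 : (1 : ℝ) ≤ 2 ^ (n * ent PS + δ) :=
      Real.one_le_rpow (by norm_num) (by positivity)
    rw [Real.logb_le_iff_le_rpow (by norm_num) (by positivity), add_assoc,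
      Real.rpow_add (by norm_num), Real.rpow_one]
    linarith

lemma code_seq {𝒮 : Type} [Fintype 𝒮] [Nonempty 𝒮] (PS : 𝒮 → ℝ) (hPS : IsPMF PS) :
    ∃ (t : ℕ → ℕ) (f : ∀ n, (Fin n → 𝒮) → Fin (t n + 1))
      (g : ∀ n, Fin (t n + 1) → (Fin n → 𝒮)) (e : ℕ → ℝ),
      Tendsto e atTop (nhds 0) ∧
      (∀ n, ∀ [DecidablePred fun s => g n (f n s) ≠ s],
        ∑ s ∈ Finset.univ.filter (fun s => g n (f n s) ≠ s), ∏ i, PS (s i) ≤ e n) ∧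
      Tendsto (fun n => entRV (fun s : Fin n → 𝒮 => ∏ i, PS (s i)) (f n) / (n : ℝ)) atTop
        (nhds (ent PS)) ∧
      Tendsto (fun n => Real.logb 2 ((t n : ℝ) + 1) / (n : ℝ)) atTop (nhds (ent PS)) := by
  have h := fun n : ℕ => code_n PS hPS n (((n : ℝ) + 1) ^ (3 / 4 : ℝ)) (by positivity)
  choose t f g e he0 he1 he2 hlo hmid hhi using h
  have hcast : Tendsto (fun n : ℕ => (n : ℝ)) atTop atTop := tendsto_natCast_atTop_atTop
  have hcast1 : Tendsto (fun n : ℕ => (n : ℝ) + 1) atTop atTop :=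
    tendsto_atTop_add_const_right _ _ hcast
  have hinv : Tendsto (fun n : ℕ => 1 / (n : ℝ)) atTop (nhds 0) := tendsto_one_div_atTop_nhds_zero_nat
  have hδ : Tendsto (fun n : ℕ => ((n : ℝ) + 1) ^ (3 / 4 : ℝ) / n) atTop (nhds 0) := by
    have h1 := (tendsto_rpow_neg_atTop (y := 1 / 4) (by norm_num)).comp hcast1
    have h2 := h1.mul (hinv.const_add 1)
    rw [add_zero, zero_mul] at h2
    refine h2.congr' ?_
    filter_upwards [eventually_gt_atTop 0] with n hn
    have hn' : (0 : ℝ) < n := by exact_mod_cast hn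
    have h3 : ((n : ℝ) + 1) ^ (3 / 4 : ℝ) = ((n : ℝ) + 1) ^ (-(1 / 4) : ℝ) * ((n : ℝ) + 1) := by
      rw [← Real.rpow_add_one (by positivity)]; norm_num
    simp only [Function.comp]
    rw [h3]; field_simp
  have hez : Tendsto e atTop (nhds 0) := by
    set V := ∑ a, PS a * (-Real.logb 2 (PS a) - ent PS) ^ 2 with hV
    have hV0 : 0 ≤ V := Finset.sum_nonneg fun a _ => mul_nonneg (hPS.1 a) (sq_nonneg _)
    have h1 := ((tendsto_rpow_neg_atTop (y := 1 / 2) (by norm_num)).comp hcast1).const_mul V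
    rw [mul_zero] at h1
    refine squeeze_zero he0 (fun n => (he1 n).trans ?_) h1
    simp only [Function.comp]
    rw [div_le_iff₀ (by positivity), ← Real.rpow_natCast, ← Real.rpow_mul (by positivity),
      mul_assoc, ← Real.rpow_add (by positivity)]
    norm_num
    nlinarith
  have hL : Tendsto (fun n : ℕ => (1 - e n) * (ent PS - ((n : ℝ) + 1) ^ (3 / 4 : ℝ) / n)) atTop
      (nhds (ent PS)) := by
    have := (hez.const_sub 1).mul (hδ.const_sub (ent PS))
    simpa using this
  have hU : Tendsto (fun n : ℕ => 1 / (n : ℝ) + ent PS + ((n : ℝ) + 1) ^ (3 / 4 : ℝ) / n) atTop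
      (nhds (ent PS)) := by
    have := (hinv.add_const (ent PS)).add hδ
    simpa using this
  have b1 : ∀ᶠ n : ℕ in atTop, (1 - e n) * (ent PS - ((n : ℝ) + 1) ^ (3 / 4 : ℝ) / n) ≤
      entRV (fun s : Fin n → 𝒮 => ∏ i, PS (s i)) (f n) / (n : ℝ) := by
    filter_upwards [eventually_gt_atTop 0] with n hn
    have hn' : (0 : ℝ) < n := by exact_mod_cast hn
    rw [le_div_iff₀ hn']
    refine le_trans (le_of_eq ?_) (hlo n)
    field_simp
  have b2 : ∀ n : ℕ, entRV (fun s : Fin n → 𝒮 => ∏ i, PS (s i)) (f n) / (n : ℝ) ≤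
      Real.logb 2 ((t n : ℝ) + 1) / (n : ℝ) :=
    fun n => div_le_div_of_nonneg_right (hmid n) (Nat.cast_nonneg n)
  have b3 : ∀ᶠ n : ℕ in atTop, Real.logb 2 ((t n : ℝ) + 1) / (n : ℝ) ≤
      1 / (n : ℝ) + ent PS + ((n : ℝ) + 1) ^ (3 / 4 : ℝ) / n := by
    filter_upwards [eventually_gt_atTop 0] with n hn
    have hn' : (0 : ℝ) < n := by exact_mod_cast hn
    rw [div_le_iff₀ hn']
    refine (hhi n).trans (le_of_eq ?_)
    field_simp
  refine ⟨t, f, g, e, hez, fun n => he2 n, ?_, ?_⟩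
  · exact tendsto_of_tendsto_of_tendsto_of_le_of_le' hL hU b1
      (b3.mono fun n hn => (b2 n).trans hn)
  · exact tendsto_of_tendsto_of_tendsto_of_le_of_le' hL hU
      (b1.mono fun n hn => hn.trans (b2 n)) b3

lemma len_seq (ℓ : ℝ) (hℓ : 0 ≤ ℓ) :
    ∃ l : ℕ → ℕ, Tendsto (fun n => Real.logb 2 ((l n : ℝ) + 1) / (n : ℝ)) atTop (nhds ℓ) := by
  refine ⟨fun n => ⌊(2 : ℝ) ^ (n * ℓ)⌋₊, ?_⟩
  have hinv : Tendsto (fun n : ℕ => 1 / (n : ℝ)) atTop (nhds 0) := tendsto_one_div_atTop_nhds_zero_nat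
  have hU : Tendsto (fun n : ℕ => 1 / (n : ℝ) + ℓ) atTop (nhds ℓ) := by
    simpa using hinv.add_const ℓ
  refine tendsto_of_tendsto_of_tendsto_of_le_of_le' tendsto_const_nhds hU ?_ ?_
  · filter_upwards [eventually_gt_atTop 0] with n hn
    have hn' : (0 : ℝ) < n := by exact_mod_cast hn
    rw [le_div_iff₀ hn', Real.le_logb_iff_rpow_le (by norm_num) (by positivity), mul_comm]
    exact (Nat.lt_floor_add_one _).le
  · filter_upwards [eventually_gt_atTop 0] with n hn
    have hn' : (0 : ℝ) < n := by exact_mod_cast hn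
    rw [div_le_iff₀ hn', Real.logb_le_iff_le_rpow (by norm_num) (by positivity), add_mul,
      one_div_mul_cancel hn'.ne', Real.rpow_add (by norm_num), Real.rpow_one, mul_comm ℓ]
    have h1 : (1 : ℝ) ≤ 2 ^ (n * ℓ) := Real.one_le_rpow (by norm_num) (by positivity)
    have h2 := Nat.floor_le (a := (2 : ℝ) ^ (n * ℓ)) (by positivity)
    linarith

/-- The scheme: a one-time pad of the source-code index, plus a shared authentication key. -/
def theScheme {𝒮 : Type} (t l : ℕ → ℕ) (f : ∀ n, (Fin n → 𝒮) → Fin (t n + 1))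
    (g : ∀ n, Fin (t n + 1) → (Fin n → 𝒮)) : Scheme22 𝒮 where
  U := fun n => Fin (t n + 1) × Fin (l n + 1)
  X := fun n => Fin (t n + 1) × Fin (l n + 1)
  Y := fun n => Fin (t n + 1) × Fin (l n + 1)
  fU := fun _ => inferInstance
  fX := fun _ => inferInstance
  fY := fun _ => inferInstance
  neU := fun _ => inferInstance
  enc := fun n s u => (u, (u.1 + f n s, u.2))
  dec := fun n xy => if xy.1.2 = xy.2.2 then some (g n (xy.2.1 - xy.1.1)) else none

lemma padBij {G K : Type*} [AddCommGroup G] (c : G) :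
    Function.Bijective (fun u : G × K => (u.1 + c, u.2)) := by
  refine Function.bijective_iff_has_inverse.2 ⟨fun u => (u.1 - c, u.2), ?_, ?_⟩ <;>
  · intro u; simp

lemma impX {G K : Type} [Fintype G] [Fintype K] [Nonempty G] [Nonempty K] [DecidableEq K]
    (A : Finset ((G × K) × (G × K))) (hA : ∀ xy, xy ∈ A ↔ xy.1.2 = xy.2.2)
    (d : G × K → ℝ) (hd : ∀ y, d y = 1 / (Fintype.card (G × K) : ℝ))
    (Q : G × K → ℝ) (hQ : IsPMF Q) :
    ∑ xy ∈ A, Q xy.1 * d xy.2 = 1 / (Fintype.card K : ℝ) ∧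
    ∑ xy ∈ A, d xy.1 * Q xy.2 = 1 / (Fintype.card K : ℝ) := by
  have hG : (Fintype.card G : ℝ) ≠ 0 := by exact_mod_cast Fintype.card_ne_zero
  have hK : (Fintype.card K : ℝ) ≠ 0 := by exact_mod_cast Fintype.card_ne_zero
  have hA' : A = Finset.univ.filter (fun xy : (G × K) × (G × K) => xy.1.2 = xy.2.2) := by
    ext xy; simp [hA]
  have hQ2 := hQ.2
  rw [Fintype.sum_prod_type] at hQ2
  subst hA'
  constructor
  · simp only [Finset.sum_filter, Fintype.sum_prod_type, hd, Fintype.card_prod, Nat.cast_mul]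
    simp only [Finset.sum_ite_eq, Finset.mem_univ, if_true, Finset.sum_const, Finset.card_univ,
      nsmul_eq_mul]
    rw [← mul_one (1 / (Fintype.card K : ℝ)), ← hQ2]
    simp only [Finset.mul_sum]
    refine Finset.sum_congr rfl fun a _ => Finset.sum_congr rfl fun b _ => ?_
    field_simp
  · rw [Finset.sum_filter, Fintype.sum_prod_type, Finset.sum_comm]
    simp only [Fintype.sum_prod_type, hd, Fintype.card_prod, Nat.cast_mul]
    simp only [Finset.sum_ite_eq', Finset.mem_univ, if_true, Finset.sum_const, Finset.card_univ,
      nsmul_eq_mul]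
    rw [← mul_one (1 / (Fintype.card K : ℝ)), ← hQ2]
    simp only [Finset.mul_sum]
    refine Finset.sum_congr rfl fun a _ => Finset.sum_congr rfl fun b _ => ?_
    field_simp

lemma mem_AccRegion {𝒮 : Type} (C : Scheme22 𝒮) (n : ℕ) (xy : C.X n × C.Y n) :
    xy ∈ AccRegion C n ↔ C.dec n xy ≠ none := by
  simp [AccRegion]

lemma exists_isPMF {α : Type*} [Fintype α] [Nonempty α] : Nonempty {Q : α → ℝ // IsPMF Q} := by
  have : (Fintype.card α : ℝ) ≠ 0 := by exact_mod_cast Fintype.card_ne_zero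
  refine ⟨⟨fun _ => 1 / (Fintype.card α : ℝ), fun _ => by positivity, ?_⟩⟩
  simp [this]

/-- Joint entropies for a generic pad scheme. -/
lemma pad_MI {A G K : Type} [Fintype A] [Fintype G] [Fintype K] [Nonempty K] [AddCommGroup G]
    (p : A → ℝ) (hp : IsPMF p) (f : A → G) :
    let P : A × (G × K) → ℝ := fun ω => p ω.1 / (Fintype.card (G × K) : ℝ)
    MI P Prod.fst (fun ω => ω.2) = 0 ∧
    MI P Prod.fst (fun ω => (ω.2.1 + f ω.1, ω.2.2)) = 0 ∧
    MI P (fun ω => ω.2) (fun ω => (ω.2.1 + f ω.1, ω.2.2)) =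
      Real.logb 2 (Fintype.card (G × K)) - entRV p f := by
  intro P
  have hX : entRV P (fun ω => ω.2) = Real.logb 2 (Fintype.card (G × K)) := by
    unfold entRV
    rw [← ent_uniform]
    congr 1
    funext y
    exact distOf_bij p hp _ (fun _ u => u) (fun _ => Function.bijective_id) y
  have hY : entRV P (fun ω => (ω.2.1 + f ω.1, ω.2.2)) = Real.logb 2 (Fintype.card (G × K)) := by
    unfold entRV
    rw [← ent_uniform]
    congr 1
    funext y
    exact distOf_bij p hp _ (fun s u => (u.1 + f s, u.2)) (fun s => padBij (f s)) y
  have hS : entRV P Prod.fst = ent p := entRV_fst p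
  have hSX : entRV P (fun ω => (ω.1, ω.2)) = ent p + Real.logb 2 (Fintype.card (G × K)) := by
    rw [← entRV_id p]
    exact entRV_prod_unif p hp (fun a => a)
  have hSY : entRV P (fun ω => (ω.1, (ω.2.1 + f ω.1, ω.2.2))) =
      ent p + Real.logb 2 (Fintype.card (G × K)) := by
    rw [← hSX]
    refine entRV_inj P (fun ω => (ω.1, ω.2))
      (fun z : A × (G × K) => (z.1, (z.2.1 + f z.1, z.2.2))) ?_
    rintro ⟨a, b, c⟩ ⟨a', b', c'⟩ h
    simp only [Prod.mk.injEq] at h ⊢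
    obtain ⟨rfl, h, rfl⟩ := h
    exact ⟨rfl, add_right_cancel h, rfl⟩
  have hXY : entRV P (fun ω => (ω.2, (ω.2.1 + f ω.1, ω.2.2))) =
      entRV p f + Real.logb 2 (Fintype.card (G × K)) := by
    rw [← entRV_prod_unif p hp f]
    refine entRV_inj P (fun ω => (f ω.1, ω.2))
      (fun z : G × (G × K) => (z.2, (z.2.1 + z.1, z.2.2))) ?_
    rintro ⟨a, b, c⟩ ⟨a', b', c'⟩ h
    simp only [Prod.mk.injEq] at h ⊢
    obtain ⟨⟨rfl, rfl⟩, h, -⟩ := h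
    exact ⟨add_left_cancel h, rfl, rfl⟩
  refine ⟨?_, ?_, ?_⟩
  · unfold MI; rw [hS, hX, hSX]; ring
  · unfold MI; rw [hS, hY, hSY]; ring
  · unfold MI; rw [hX, hY, hXY]; ring

/-- optimality with limits: for every source distribution
and every `ℓ ≥ 0`, there is a sequence of encoder/decoder pairs asymptotically
realizing a (2,2)-threshold scheme with correlation level `ℓ` for which the
rates of both shares and of the random number converge to `H(S)+ℓ` and the
exponents of both impersonation success probabilities converge to `ℓ`. -/
theorem statement4 {𝒮 : Type} [Fintype 𝒮] (PS : 𝒮 → ℝ) (hPS : IsPMF PS)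
    (ℓ : ℝ) (hℓ : 0 ≤ ℓ) :
    ∃ C : Scheme22 𝒮, Realizes C PS ℓ ∧
      Tendsto (fun n => Real.logb 2 (Fintype.card (C.X n)) / (n : ℝ)) atTop
        (nhds (ent PS + ℓ)) ∧
      Tendsto (fun n => Real.logb 2 (Fintype.card (C.Y n)) / (n : ℝ)) atTop
        (nhds (ent PS + ℓ)) ∧
      Tendsto (fun n => Real.logb 2 (Fintype.card (C.U n)) / (n : ℝ)) atTop
        (nhds (ent PS + ℓ)) ∧
      Tendsto (fun n => -Real.logb 2 (PimpX C PS n) / (n : ℝ)) atTop (nhds ℓ) ∧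
      Tendsto (fun n => -Real.logb 2 (PimpY C PS n) / (n : ℝ)) atTop (nhds ℓ) := by
  classical
  have hne : Nonempty 𝒮 := by
    by_contra h
    rw [not_nonempty_iff] at h
    have := hPS.2
    simp at this
  obtain ⟨t, f, g, e, he, hPe, hent, ht⟩ := code_seq PS hPS
  obtain ⟨l, hl⟩ := len_seq ℓ hℓ
  have hpP : ∀ n, IsPMF (fun s : Fin n → 𝒮 => ∏ i, PS (s i)) := fun n =>
    ⟨fun s => Finset.prod_nonneg fun i _ => hPS.1 _,
      (moments PS hPS (fun _ => 0) (by simp) n).1⟩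
  have hlogc : ∀ n, Real.logb 2 (Fintype.card (Fin (t n + 1) × Fin (l n + 1))) =
      Real.logb 2 ((t n : ℝ) + 1) + Real.logb 2 ((l n : ℝ) + 1) := by
    intro n
    rw [Fintype.card_prod, Fintype.card_fin, Fintype.card_fin]
    push_cast
    exact Real.logb_mul (by positivity) (by positivity)
  have hrate : Tendsto (fun n => Real.logb 2 (Fintype.card (Fin (t n + 1) × Fin (l n + 1))) /
      (n : ℝ)) atTop (nhds (ent PS + ℓ)) := by
    refine (ht.add hl).congr fun n => ?_
    rw [hlogc, add_div]
  have hMI := fun n => pad_MI (K := Fin (l n + 1)) _ (hpP n) (f n)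
  set C := theScheme t l f g with hC
  have hacc : ∀ n (xy : (Fin (t n + 1) × Fin (l n + 1)) × (Fin (t n + 1) × Fin (l n + 1))),
      xy ∈ AccRegion C n ↔ xy.1.2 = xy.2.2 := by
    intro n xy
    refine (mem_AccRegion C n xy).trans ?_
    change (if xy.1.2 = xy.2.2 then some (g n (xy.2.1 - xy.1.1)) else none) ≠ none ↔ _
    split_ifs with h <;> simp [h]
  have hdX : ∀ n (x : Fin (t n + 1) × Fin (l n + 1)), distOf (jp C PS n) (Xn C n) x =
      1 / (Fintype.card (Fin (t n + 1) × Fin (l n + 1)) : ℝ) := fun n x =>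
    distOf_bij _ (hpP n) _ (fun _ u => u) (fun _ => Function.bijective_id) x
  have hdY : ∀ n (x : Fin (t n + 1) × Fin (l n + 1)), distOf (jp C PS n) (Yn C n) x =
      1 / (Fintype.card (Fin (t n + 1) × Fin (l n + 1)) : ℝ) := fun n x =>
    distOf_bij _ (hpP n) _ (fun s u => (u.1 + f n s, u.2)) (fun s => padBij (f n s)) x
  have hPX : ∀ n, PimpX C PS n = 1 / (Fintype.card (Fin (l n + 1)) : ℝ) := by
    intro n
    have : Nonempty {Q : Fin (t n + 1) × Fin (l n + 1) → ℝ // IsPMF Q} :=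
      exists_isPMF (α := Fin (t n + 1) × Fin (l n + 1))
    unfold PimpX
    exact (iSup_congr fun Q : {Q : Fin (t n + 1) × Fin (l n + 1) → ℝ // IsPMF Q} =>
      (impX _ (hacc n) _ (hdY n) Q.1 Q.2).1).trans ciSup_const
  have hPY : ∀ n, PimpY C PS n = 1 / (Fintype.card (Fin (l n + 1)) : ℝ) := by
    intro n
    have : Nonempty {Q : Fin (t n + 1) × Fin (l n + 1) → ℝ // IsPMF Q} :=
      exists_isPMF (α := Fin (t n + 1) × Fin (l n + 1))
    unfold PimpY
    exact (iSup_congr fun Q : {Q : Fin (t n + 1) × Fin (l n + 1) → ℝ // IsPMF Q} =>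
      (impX _ (hacc n) _ (hdX n) Q.1 Q.2).2).trans ciSup_const
  have hexp : ∀ n : ℕ, Real.logb 2 ((l n : ℝ) + 1) / (n : ℝ) =
      -Real.logb 2 (1 / (Fintype.card (Fin (l n + 1)) : ℝ)) / (n : ℝ) := by
    intro n
    rw [one_div, Real.logb_inv, neg_neg, Fintype.card_fin]
    push_cast
    rfl
  have hPeC : ∀ n, Pe C PS n ≤ e n := by
    intro n
    refine le_trans (le_of_eq ?_) (hPe n)
    unfold Pe
    have hdec : ∀ ω : (Fin n → 𝒮) × (Fin (t n + 1) × Fin (l n + 1)),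
        C.dec n (C.enc n ω.1 ω.2) = some (g n (f n ω.1)) := by
      intro ω
      change (if ω.2.2 = ω.2.2 then some (g n (ω.2.1 + f n ω.1 - ω.2.1)) else none) = _
      simp
    have hN : (Fintype.card (Fin (t n + 1) × Fin (l n + 1)) : ℝ) ≠ 0 := by
      exact_mod_cast Fintype.card_ne_zero
    have h1 : ∀ ω : (Fin n → 𝒮) × (Fin (t n + 1) × Fin (l n + 1)),
        (C.dec n (C.enc n ω.1 ω.2) ≠ some ω.1) ↔ g n (f n ω.1) ≠ ω.1 := by
      intro ω; rw [hdec]; simp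
    rw [Finset.sum_filter, Finset.sum_filter]
    trans ∑ ω : (Fin n → 𝒮) × (Fin (t n + 1) × Fin (l n + 1)),
      if g n (f n ω.1) ≠ ω.1 then
        (∏ i, PS (ω.1 i)) / (Fintype.card (Fin (t n + 1) × Fin (l n + 1)) : ℝ) else 0
    · refine Finset.sum_congr rfl fun ω _ => ?_
      exact if_congr (h1 ω) rfl rfl
    · rw [Fintype.sum_prod_type]
      refine Finset.sum_congr rfl fun s _ => ?_
      simp only [Finset.sum_const, Finset.card_univ, nsmul_eq_mul]
      split_ifs
      · field_simp
      · simp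
  have hPe0 : ∀ n, 0 ≤ Pe C PS n := by
    intro n
    refine Finset.sum_nonneg fun ω _ => ?_
    exact div_nonneg ((hpP n).1 ω.1) (Nat.cast_nonneg _)
  refine ⟨C, ⟨squeeze_zero hPe0 hPeC he, ?_, ?_, ?_⟩, hrate, hrate, hrate, ?_, ?_⟩
  · have : ∀ n, MI (jp C PS n) (Sn C n) (Xn C n) = 0 := fun n => (hMI n).1
    simp [this]
  · have : ∀ n, MI (jp C PS n) (Sn C n) (Yn C n) = 0 := fun n => (hMI n).2.1
    simp [this]
  · have h1 : ∀ n, MI (jp C PS n) (Xn C n) (Yn C n) =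
        Real.logb 2 (Fintype.card (Fin (t n + 1) × Fin (l n + 1))) -
          entRV (fun s : Fin n → 𝒮 => ∏ i, PS (s i)) (f n) := fun n => (hMI n).2.2
    have h2 := hrate.sub hent
    rw [add_sub_cancel_left] at h2
    refine h2.congr fun n => ?_
    rw [h1, sub_div]
  · simp_rw [hPX, ← hexp]; exact hl
  · simp_rw [hPY, ← hexp]; exact hl
end
end

section
/- Let (X,Y) be a pair of random variables taking values in finite sets 𝒳 × 𝒴, let A ⊆ 𝒳 × 𝒴, and set α = Pr{(X,Y) ∉ A}, β = Σ_{(x,y)∈A} P_X(x)P_Y(y), P^X = max over probability distributions Q on 𝒳 of Σ_{(x,y)∈A} Q(x)P_Y(y), and P^Y = max over probability distributions Q on 𝒴 of Σ_{(x,y)∈A} P_X(x)Q(y). Then P^X ≥ β, P^Y ≥ β, and if β > 0, I(X;Y) ≥ −h(α) + (1−α) · max{ −log₂ P^X , −log₂ P^Y }, where h(p) = −p log₂ p − (1−p) log₂(1−p) is the binary entropy function. -/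
open Finset Filter Real
open scoped BigOperators

noncomputable section

/-- The `𝒳`-marginal of a joint distribution on `𝒳 × 𝒴`. -/
def margX {𝒳 𝒴 : Type*} [Fintype 𝒴] (q : 𝒳 × 𝒴 → ℝ) : 𝒳 → ℝ :=
  fun x => ∑ y, q (x, y)

/-- The `𝒴`-marginal of a joint distribution on `𝒳 × 𝒴`. -/
def margY {𝒳 𝒴 : Type*} [Fintype 𝒳] (q : 𝒳 × 𝒴 → ℝ) : 𝒴 → ℝ :=
  fun y => ∑ x, q (x, y)

/-- Base-2 mutual information of a joint distribution on `𝒳 × 𝒴`. -/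
def miDist {𝒳 𝒴 : Type*} [Fintype 𝒳] [Fintype 𝒴] (q : 𝒳 × 𝒴 → ℝ) : ℝ :=
  ent (margX q) + ent (margY q) - ent q

/-- The binary entropy function `h(a) = −a log₂ a − (1−a) log₂ (1−a)`. -/
def binEnt (a : ℝ) : ℝ :=
  -(a * Real.logb 2 a) - (1 - a) * Real.logb 2 (1 - a)

theorem aux_sum_distOf {Ω α : Type*} [Fintype Ω] [Fintype α] (p : Ω → ℝ) (X : Ω → α)
    (f : α → ℝ) : ∑ x, distOf p X x * f x = ∑ ω, p ω * f (X ω) := by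
  classical
  rw [← Finset.sum_fiberwise Finset.univ X]
  refine Finset.sum_congr rfl fun x _ => ?_
  unfold distOf
  rw [Finset.sum_mul]
  refine Finset.sum_congr (by ext; simp) fun ω hω => ?_
  rw [(Finset.mem_filter.1 hω).2]

theorem aux_distOf_nonneg {Ω α : Type*} [Fintype Ω] {p : Ω → ℝ} (hp : IsPMF p) (X : Ω → α)
    (x : α) : 0 ≤ distOf p X x :=
  Finset.sum_nonneg fun ω _ => hp.1 ω

theorem aux_distOf_isPMF {Ω α : Type*} [Fintype Ω] [Fintype α] {p : Ω → ℝ} (hp : IsPMF p)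
    (X : Ω → α) : IsPMF (distOf p X) := by
  refine ⟨aux_distOf_nonneg hp X, ?_⟩
  have := aux_sum_distOf p X (fun _ => 1)
  simpa [hp.2] using this

theorem aux_le_distOf {Ω α : Type*} [Fintype Ω] {p : Ω → ℝ} (hp : IsPMF p) (X : Ω → α)
    (ω : Ω) : p ω ≤ distOf p X (X ω) := by
  unfold distOf
  exact Finset.single_le_sum (f := p) (fun i _ => hp.1 i) (by simp)

theorem aux_pmf_le_one {α : Type*} [Fintype α] {q : α → ℝ} (hq : IsPMF q) (a : α) : q a ≤ 1 := by
  rw [← hq.2]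
  exact Finset.single_le_sum (f := q) (fun i _ => hq.1 i) (Finset.mem_univ a)

theorem aux_gibbs {q s : ℝ} (hq : 0 ≤ q) (hs : 0 ≤ s) (h : 0 < q → 0 < s) :
    q - s ≤ q * (Real.log q - Real.log s) := by
  rcases hq.eq_or_lt with h0 | h0
  · rw [← h0]; simp [hs]
  · have hs' := h h0
    have h1 := Real.log_le_sub_one_of_pos (div_pos hs' h0)
    rw [Real.log_div hs'.ne' h0.ne'] at h1
    have h2 := mul_le_mul_of_nonneg_left h1 hq
    have h3 : q * (s / q - 1) = s - q := by field_simp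
    nlinarith

open scoped Classical in
theorem aux_main {Ω 𝒳 𝒴 : Type} [Fintype Ω] [Fintype 𝒳] [Fintype 𝒴]
    (p : Ω → ℝ) (hp : IsPMF p) (X : Ω → 𝒳) (Y : Ω → 𝒴) (A : Finset (𝒳 × 𝒴))
    (α β : ℝ)
    (hα : α = ∑ ω ∈ Finset.univ.filter (fun ω => (X ω, Y ω) ∉ A), p ω)
    (hβ : β = ∑ xy ∈ A, distOf p X xy.1 * distOf p Y xy.2) (hβ0 : 0 < β) :
    (1 - α) * (Real.log (1 - α) - Real.log β) + α * Real.log α ≤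
      ∑ ω, p ω * (Real.log (distOf p (fun ω => (X ω, Y ω)) (X ω, Y ω))
        - Real.log (distOf p X (X ω)) - Real.log (distOf p Y (Y ω))) := by
  have hα0 : 0 ≤ α := hα ▸ Finset.sum_nonneg fun ω _ => hp.1 ω
  have hα1 : 1 - α = ∑ ω ∈ Finset.univ.filter (fun ω => (X ω, Y ω) ∈ A), p ω := by
    have := Finset.sum_filter_add_sum_filter_not Finset.univ (fun ω => (X ω, Y ω) ∈ A) p
    rw [hp.2] at this
    linarith
  have hα1' : 0 ≤ 1 - α := hα1 ▸ Finset.sum_nonneg fun ω _ => hp.1 ω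
  set Z : Ω → 𝒳 × 𝒴 := fun ω => (X ω, Y ω) with hZ
  set r : 𝒳 × 𝒴 → ℝ := fun z => distOf p X z.1 * distOf p Y z.2 with hr
  set k : 𝒳 × 𝒴 → ℝ := fun z => if z ∈ A then (1 - α) / β else α with hk
  have hr0 : ∀ z, 0 ≤ r z := fun z =>
    mul_nonneg (aux_distOf_nonneg hp X _) (aux_distOf_nonneg hp Y _)
  have hk0 : ∀ z, 0 ≤ k z := fun z => by
    simp only [hk]; split_ifs
    · positivity
    · exact hα0
  have hrsum : ∑ z, r z = 1 := by
    rw [Fintype.sum_prod_type]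
    simp only [hr, ← Finset.mul_sum, (aux_distOf_isPMF hp Y).2, mul_one]
    exact (aux_distOf_isPMF hp X).2
  have hpos : ∀ ω, 0 < p ω → 0 < distOf p X (X ω) ∧ 0 < distOf p Y (Y ω) ∧ 0 < k (Z ω) := by
    intro ω h
    refine ⟨h.trans_le (aux_le_distOf hp X ω), h.trans_le (aux_le_distOf hp Y ω), ?_⟩
    simp only [hk]
    split_ifs with hA
    · refine div_pos (h.trans_le ?_) hβ0
      rw [hα1]
      exact Finset.single_le_sum (f := p) (fun i _ => hp.1 i) (by simpa using hA)
    · refine h.trans_le ?_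
      rw [hα]
      exact Finset.single_le_sum (f := p) (fun i _ => hp.1 i) (by simpa using hA)
  have hqpos : ∀ z, 0 < distOf p Z z → 0 < r z * k z := by
    intro z hz
    obtain ⟨ω, hω, hω'⟩ := Finset.exists_ne_zero_of_sum_ne_zero hz.ne'
    have hωz : Z ω = z := by simpa only [Finset.mem_filter, Finset.mem_univ, true_and] using hω
    obtain ⟨h1, h2, h3⟩ := hpos ω (lt_of_le_of_ne (hp.1 ω) (Ne.symm hω'))
    rw [← hωz]
    exact mul_pos (mul_pos h1 h2) h3
  have hssum : ∑ z, r z * k z ≤ 1 := by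
    have h1 : ∑ z ∈ Finset.univ.filter (fun z => z ∈ A), r z * k z = 1 - α := by
      have : Finset.univ.filter (fun z => z ∈ A) = A := by ext; simp
      rw [this, Finset.sum_congr rfl (g := fun z => r z * ((1 - α) / β))
        (fun z hz => by simp [hk, hz]), ← Finset.sum_mul, ← hβ]
      field_simp
    have h2 : ∑ z ∈ Finset.univ.filter (fun z => z ∉ A), r z * k z ≤ α := by
      rw [Finset.sum_congr rfl (g := fun z => r z * α)
        (fun z hz => by simp [hk, (Finset.mem_filter.1 hz).2]), ← Finset.sum_mul]
      have : ∑ z ∈ Finset.univ.filter (fun z => z ∉ A), r z ≤ 1 := by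
        rw [← hrsum]
        exact Finset.sum_le_sum_of_subset_of_nonneg (Finset.subset_univ _) fun z _ _ => hr0 z
      nlinarith
    have h3 := Finset.sum_filter_add_sum_filter_not Finset.univ (fun z => z ∈ A)
      (fun z => r z * k z)
    linarith
  have hG : 0 ≤ ∑ z, distOf p Z z * (Real.log (distOf p Z z) - Real.log (r z * k z)) := by
    have h := Finset.sum_le_sum fun z (_ : z ∈ Finset.univ) =>
      aux_gibbs (aux_distOf_nonneg hp Z z) (mul_nonneg (hr0 z) (hk0 z)) (hqpos z)
    rw [Finset.sum_sub_distrib, (aux_distOf_isPMF hp Z).2] at h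
    linarith
  rw [aux_sum_distOf p Z (fun z => Real.log (distOf p Z z) - Real.log (r z * k z))] at hG
  have hK : ∑ ω, p ω * Real.log (k (Z ω)) =
      (1 - α) * (Real.log (1 - α) - Real.log β) + α * Real.log α := by
    rw [← Finset.sum_filter_add_sum_filter_not Finset.univ (fun ω => (X ω, Y ω) ∈ A)]
    congr 1
    · rw [Finset.sum_congr rfl (g := fun ω => p ω * Real.log ((1 - α) / β))
        (fun ω hω => by
          have := (Finset.mem_filter.1 hω).2
          simp [hk, hZ, this]), ← Finset.sum_mul, ← hα1]
      rcases hα1'.eq_or_lt with h | h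
      · rw [← h]; simp
      · rw [Real.log_div h.ne' hβ0.ne']
    · rw [Finset.sum_congr rfl (g := fun ω => p ω * Real.log α)
        (fun ω hω => by
          have := (Finset.mem_filter.1 hω).2
          simp [hk, hZ, this]), ← Finset.sum_mul, ← hα]
  rw [← hK, ← sub_nonneg, ← Finset.sum_sub_distrib]
  refine hG.trans_eq (Finset.sum_congr rfl fun ω _ => ?_)
  rcases (hp.1 ω).eq_or_lt with h | h
  · simp [← h]
  · obtain ⟨h1, h2, h3⟩ := hpos ω h
    have : Real.log (r (Z ω) * k (Z ω)) = Real.log (distOf p X (X ω))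
        + Real.log (distOf p Y (Y ω)) + Real.log (k (Z ω)) := by
      rw [Real.log_mul (mul_pos h1 h2).ne' h3.ne', Real.log_mul h1.ne' h2.ne']
    rw [this]
    ring

theorem aux_MI {Ω 𝒳 𝒴 : Type} [Fintype Ω] [Fintype 𝒳] [Fintype 𝒴]
    (p : Ω → ℝ) (X : Ω → 𝒳) (Y : Ω → 𝒴) :
    MI p X Y = (∑ ω, p ω * (Real.log (distOf p (fun ω => (X ω, Y ω)) (X ω, Y ω))
        - Real.log (distOf p X (X ω)) - Real.log (distOf p Y (Y ω)))) / Real.log 2 := by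
  unfold MI entRV ent
  rw [aux_sum_distOf p X (fun x => Real.logb 2 (distOf p X x)),
    aux_sum_distOf p Y (fun x => Real.logb 2 (distOf p Y x)),
    aux_sum_distOf p (fun ω => (X ω, Y ω))
      (fun x => Real.logb 2 (distOf p (fun ω => (X ω, Y ω)) x)),
    Finset.sum_div, ← Finset.sum_neg_distrib, ← Finset.sum_neg_distrib,
    ← Finset.sum_add_distrib, sub_neg_eq_add, ← Finset.sum_add_distrib]
  refine Finset.sum_congr rfl fun ω _ => ?_
  simp only [Real.logb]
  ring

open scoped Classical in
/-- for random variables `X`, `Y` and an acceptance region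
`A`, with `α = Pr{(X,Y) ∉ A}`, `β = (P_X×P_Y)(A)` and impersonation success
probabilities `Pˣ`, `Pʸ` (suprema over forging distributions), one has
`Pˣ ≥ β`, `Pʸ ≥ β`, and if `β > 0` then
`I(X;Y) ≥ −h(α) + (1−α)·max{−log₂ Pˣ, −log₂ Pʸ}`. -/
theorem statement8 {Ω 𝒳 𝒴 : Type} [Fintype Ω] [Fintype 𝒳] [Fintype 𝒴]
    (p : Ω → ℝ) (hp : IsPMF p) (X : Ω → 𝒳) (Y : Ω → 𝒴) (A : Finset (𝒳 × 𝒴))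
    (α β PX PY : ℝ)
    (hα : α = ∑ ω ∈ Finset.univ.filter (fun ω => (X ω, Y ω) ∉ A), p ω)
    (hβ : β = ∑ xy ∈ A, distOf p X xy.1 * distOf p Y xy.2)
    (hPX : PX = ⨆ Q : {Q : 𝒳 → ℝ // IsPMF Q},
      ∑ xy ∈ A, Q.1 xy.1 * distOf p Y xy.2)
    (hPY : PY = ⨆ Q : {Q : 𝒴 → ℝ // IsPMF Q},
      ∑ xy ∈ A, distOf p X xy.1 * Q.1 xy.2) :
    β ≤ PX ∧ β ≤ PY ∧
    (0 < β →
      -binEnt α + (1 - α) * max (-Real.logb 2 PX) (-Real.logb 2 PY)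
        ≤ MI p X Y) := by
  have hX := aux_distOf_isPMF hp X
  have hY := aux_distOf_isPMF hp Y
  have h1 : β ≤ PX := by
    rw [hβ, hPX]
    refine le_ciSup (f := fun Q : {Q : 𝒳 → ℝ // IsPMF Q} =>
      ∑ xy ∈ A, Q.1 xy.1 * distOf p Y xy.2) ⟨∑ xy ∈ A, (1 : ℝ), ?_⟩ ⟨distOf p X, hX⟩
    rintro _ ⟨Q, rfl⟩
    exact Finset.sum_le_sum fun xy _ =>
      mul_le_one₀ (aux_pmf_le_one Q.2 _) (hY.1 _) (aux_pmf_le_one hY _)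
  have h2 : β ≤ PY := by
    rw [hβ, hPY]
    refine le_ciSup (f := fun Q : {Q : 𝒴 → ℝ // IsPMF Q} =>
      ∑ xy ∈ A, distOf p X xy.1 * Q.1 xy.2) ⟨∑ xy ∈ A, (1 : ℝ), ?_⟩ ⟨distOf p Y, hY⟩
    rintro _ ⟨Q, rfl⟩
    exact Finset.sum_le_sum fun xy _ =>
      mul_le_one₀ (aux_pmf_le_one hX _) (Q.2.1 _) (aux_pmf_le_one Q.2 _)
  refine ⟨h1, h2, fun hβ0 => ?_⟩
  have hm := aux_main p hp X Y A α β hα hβ hβ0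
  have hl2 : 0 < Real.log 2 := Real.log_pos (by norm_num)
  have hα1 : 0 ≤ 1 - α := by
    rw [hα, ← hp.2, sub_nonneg]
    exact Finset.sum_le_sum_of_subset_of_nonneg (Finset.subset_univ _) fun z _ _ => hp.1 z
  have hmax : max (-Real.logb 2 PX) (-Real.logb 2 PY) ≤ -Real.logb 2 β :=
    max_le (neg_le_neg (Real.logb_le_logb_of_le (by norm_num) hβ0 h1))
      (neg_le_neg (Real.logb_le_logb_of_le (by norm_num) hβ0 h2))
  have h3 := mul_le_mul_of_nonneg_left hmax hα1
  rw [aux_MI]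
  refine le_trans (add_le_add_right h3 _) (le_trans (le_of_eq ?_)
    (div_le_div_of_nonneg_right hm hl2.le))
  simp only [binEnt, Real.logb]
  ring
end
end
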